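/- Define on ℝ³ the first-order reconstruction V^x(x,y,z) = V_x^1(y − 1/2)(z − 1/2) + V_x^2(y + 1/2)(1/2 − z) + V_x^3(1/2 − y)(z + 1/2) + V_x^4(y + 1/2)(z + 1/2), V^y(x,y,z) = V_y^1(z − 1/2)(x − 1/2) + V_y^2(z + 1/2)(1/2 − x) + V_y^3(1/2 − z)(x + 1/2) + V_y^4(z + 1/2)(x + 1/2), and V^z(x,y,z) = V_z^1(x − 1/2)(y − 1/2) + V_z^2(x + 1/2)(1/2 − y) + V_z^3(1/2 − x)(y + 1/2) + V_z^4(x + 1/2)(y + 1/2). Then for every (x,y,z) ∈ ℝ³: (∇×V)_x = ∂_y V^z − ∂_z V^y = (1/2)(V_y^1 − V_y^2 + V_y^3 − V_y^4 − V_z^1 − V_z^2 + V_z^3 + V_z^4) + (−V_y^1 + V_y^2 + V_y^3 − V_y^4 + V_z^1 − V_z^2 − V_z^3 + V_z^4)·x; (∇×V)_y = ∂_z V^x − ∂_x V^z = (1/2)(V_z^1 − V_z^2 + V_z^3 − V_z^4 − V_x^1 − V_x^2 + V_x^3 + V_x^4) + (−V_z^1 + V_z^2 + V_z^3 − V_z^4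 + V_x^1 − V_x^2 − V_x^3 + V_x^4)·y; (∇×V)_z = ∂_x V^y − ∂_y V^x = (1/2)(V_x^1 − V_x^2 + V_x^3 − V_x^4 − V_y^1 − V_y^2 + V_y^3 + V_y^4) + (−V_x^1 + V_x^2 + V_x^3 − V_x^4 + V_y^1 − V_y^2 − V_y^3 + V_y^4)·z. In particular, if all six face circulation conditions hold (V_y^3 + V_z^4 − V_y^4 − V_z^2 = 0, V_y^1 + V_z^3 − V_y^2 − V_z^1 = 0, V_z^3 + V_x^4 − V_z^4 − V_x^2 = 0, V_z^1 + V_x^3 − V_z^2 − V_x^1 = 0, V_x^3 + V_y^4 − V_x^4 − V_y^2 = 0, V_x^1 + V_y^3 − V_x^2 − V_y^1 = 0), then ∇×V vanishes identically. -/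

import Mathlib

/-- x-component of the first-order 3D reconstruction (eqn. 3.4). -/
noncomputable def W1x (vx1 vx2 vx3 vx4 x y z : ℝ) : ℝ :=
  vx1 * (y - 1 / 2) * (z - 1 / 2) + vx2 * (y + 1 / 2) * (1 / 2 - z) +
    vx3 * (1 / 2 - y) * (z + 1 / 2) + vx4 * (y + 1 / 2) * (z + 1 / 2)

/-- y-component of the first-order 3D reconstruction (eqn. 3.5). -/
noncomputable def W1y (vy1 vy2 vy3 vy4 x y z : ℝ) : ℝ :=
  vy1 * (z - 1 / 2) * (x - 1 / 2) + vy2 * (z + 1 / 2) * (1 / 2 - x) +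
    vy3 * (1 / 2 - z) * (x + 1 / 2) + vy4 * (z + 1 / 2) * (x + 1 / 2)

/-- z-component of the first-order 3D reconstruction (eqn. 3.6). -/
noncomputable def W1z (vz1 vz2 vz3 vz4 x y z : ℝ) : ℝ :=
  vz1 * (x - 1 / 2) * (y - 1 / 2) + vz2 * (x + 1 / 2) * (1 / 2 - y) +
    vz3 * (1 / 2 - x) * (y + 1 / 2) + vz4 * (x + 1 / 2) * (y + 1 / 2)

/-!
Each component of the reconstruction is the bilinear interpolant of its four edge values in the two
transverse variables. A partial derivative of a bilinear interpolant interpolates linearly between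
the differences along opposite edges, so a component of the curl interpolates linearly between the
circulations of the two faces normal to it.
-/

open AffineMap

section BilinearInterp

/-- The bilinear interpolant on the unit square `[0, 1]²` taking the values `a`, `b`, `c`, `d` at
`(0, 0)`, `(1, 0)`, `(0, 1)`, `(1, 1)`; each component of the reconstruction has this form after
moving the origin to a corner of the cube. -/
def bilinearInterp {R E : Type*} [Ring R] [AddCommGroup E] [Module R E]
    (a b c d : E) (s t : R) : E :=
  lineMap (lineMap a b s) (lineMap c d s) t

theorem bilinearInterp_swap {R E : Type*} [CommRing R] [AddCommGroup E] [Module R E]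
    (a b c d : E) (s t : R) :
    bilinearInterp a b c d s t = bilinearInterp a c b d t s := by
  simp only [bilinearInterp, lineMap_apply_module]
  module

variable {𝕜 E : Type*} [NontriviallyNormedField 𝕜] [NormedAddCommGroup E] [NormedSpace 𝕜 E]

theorem hasDerivAt_bilinearInterp_right (a b c d : E) (s t : 𝕜) :
    HasDerivAt (fun t' => bilinearInterp a b c d s t') (lineMap (c - a) (d - b) s) t := by
  have slope_eq : lineMap (c - a) (d - b) s = lineMap c d s - lineMap a b s :=
    (lineMap_vsub_lineMap c d a b s).symm
  rw [slope_eq]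
  exact hasDerivAt_lineMap

theorem hasDerivAt_bilinearInterp_left (a b c d : E) (s t : 𝕜) :
    HasDerivAt (fun s' => bilinearInterp a b c d s' t) (lineMap (b - a) (d - c) t) s := by
  simpa only [bilinearInterp_swap a b c d] using hasDerivAt_bilinearInterp_right a c b d t s

theorem deriv_sub_deriv_bilinearInterp_comp_add_const (v₁ v₂ v₃ v₄ w₁ w₂ w₃ w₄ : E)
    (r s t h : 𝕜) :
    deriv (fun t' => bilinearInterp w₁ w₂ w₃ w₄ r (t' + h)) t -
        deriv (fun s' => bilinearInterp v₁ v₂ v₃ v₄ (s' + h) r) s =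
      lineMap (v₁ + w₃ - v₂ - w₁) (v₃ + w₄ - v₄ - w₂) r := by
  rw [((hasDerivAt_bilinearInterp_right w₁ w₂ w₃ w₄ r (t + h)).comp_add_const t h).deriv,
    ((hasDerivAt_bilinearInterp_left v₁ v₂ v₃ v₄ (s + h) r).comp_add_const s h).deriv]
  simp only [lineMap_apply_module]
  module

end BilinearInterp

theorem W1x_eq_bilinearInterp (v₁ v₂ v₃ v₄ x y z : ℝ) :
    W1x v₁ v₂ v₃ v₄ x y z = bilinearInterp v₁ v₂ v₃ v₄ (y + 1 / 2) (z + 1 / 2) := by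
  simp only [W1x, bilinearInterp, lineMap_apply_ring]
  ring

theorem W1y_eq_bilinearInterp (v₁ v₂ v₃ v₄ x y z : ℝ) :
    W1y v₁ v₂ v₃ v₄ x y z = bilinearInterp v₁ v₂ v₃ v₄ (z + 1 / 2) (x + 1 / 2) := by
  simp only [W1y, bilinearInterp, lineMap_apply_ring]
  ring

theorem W1z_eq_bilinearInterp (v₁ v₂ v₃ v₄ x y z : ℝ) :
    W1z v₁ v₂ v₃ v₄ x y z = bilinearInterp v₁ v₂ v₃ v₄ (x + 1 / 2) (y + 1 / 2) := by
  simp only [W1z, bilinearInterp, lineMap_apply_ring]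
  ring

theorem curl_x_eq_lineMap_circulation (vy₁ vy₂ vy₃ vy₄ vz₁ vz₂ vz₃ vz₄ x y z : ℝ) :
    deriv (fun y' => W1z vz₁ vz₂ vz₃ vz₄ x y' z) y -
        deriv (fun z' => W1y vy₁ vy₂ vy₃ vy₄ x y z') z =
      lineMap (vy₁ + vz₃ - vy₂ - vz₁) (vy₃ + vz₄ - vy₄ - vz₂) (x + 1 / 2) := by
  simp only [W1y_eq_bilinearInterp, W1z_eq_bilinearInterp]
  exact deriv_sub_deriv_bilinearInterp_comp_add_const ..

theorem curl_y_eq_lineMap_circulation (vx₁ vx₂ vx₃ vx₄ vz₁ vz₂ vz₃ vz₄ x y z : ℝ) :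
    deriv (fun z' => W1x vx₁ vx₂ vx₃ vx₄ x y z') z -
        deriv (fun x' => W1z vz₁ vz₂ vz₃ vz₄ x' y z) x =
      lineMap (vz₁ + vx₃ - vz₂ - vx₁) (vz₃ + vx₄ - vz₄ - vx₂) (y + 1 / 2) := by
  simp only [W1z_eq_bilinearInterp, W1x_eq_bilinearInterp]
  exact deriv_sub_deriv_bilinearInterp_comp_add_const ..

theorem curl_z_eq_lineMap_circulation (vx₁ vx₂ vx₃ vx₄ vy₁ vy₂ vy₃ vy₄ x y z : ℝ) :
    deriv (fun x' => W1y vy₁ vy₂ vy₃ vy₄ x' y z) x -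
        deriv (fun y' => W1x vx₁ vx₂ vx₃ vx₄ x y' z) y =
      lineMap (vx₁ + vy₃ - vx₂ - vy₁) (vx₃ + vy₄ - vx₄ - vy₂) (z + 1 / 2) := by
  simp only [W1x_eq_bilinearInterp, W1y_eq_bilinearInterp]
  exact deriv_sub_deriv_bilinearInterp_comp_add_const ..

/-- the curl of the first-order 3D reconstruction is given by the
discrete face circulations (eqns. 3.7–3.9); in particular, if all six face
circulation conditions hold, the curl vanishes identically. -/
theorem stmt_8 (vx1 vx2 vx3 vx4 vy1 vy2 vy3 vy4 vz1 vz2 vz3 vz4 : ℝ) :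
    ((∀ x y z : ℝ,
      deriv (fun y' : ℝ => W1z vz1 vz2 vz3 vz4 x y' z) y -
          deriv (fun z' : ℝ => W1y vy1 vy2 vy3 vy4 x y z') z =
        (1 / 2) * (vy1 - vy2 + vy3 - vy4 - vz1 - vz2 + vz3 + vz4) +
          (-vy1 + vy2 + vy3 - vy4 + vz1 - vz2 - vz3 + vz4) * x) ∧
    (∀ x y z : ℝ,
      deriv (fun z' : ℝ => W1x vx1 vx2 vx3 vx4 x y z') z -
          deriv (fun x' : ℝ => W1z vz1 vz2 vz3 vz4 x' y z) x =
        (1 / 2) * (vz1 - vz2 + vz3 - vz4 - vx1 - vx2 + vx3 + vx4) +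
          (-vz1 + vz2 + vz3 - vz4 + vx1 - vx2 - vx3 + vx4) * y) ∧
    (∀ x y z : ℝ,
      deriv (fun x' : ℝ => W1y vy1 vy2 vy3 vy4 x' y z) x -
          deriv (fun y' : ℝ => W1x vx1 vx2 vx3 vx4 x y' z) y =
        (1 / 2) * (vx1 - vx2 + vx3 - vx4 - vy1 - vy2 + vy3 + vy4) +
          (-vx1 + vx2 + vx3 - vx4 + vy1 - vy2 - vy3 + vy4) * z)) ∧
    (vy3 + vz4 - vy4 - vz2 = 0 → vy1 + vz3 - vy2 - vz1 = 0 →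
      vz3 + vx4 - vz4 - vx2 = 0 → vz1 + vx3 - vz2 - vx1 = 0 →
      vx3 + vy4 - vx4 - vy2 = 0 → vx1 + vy3 - vx2 - vy1 = 0 →
      ∀ x y z : ℝ,
        deriv (fun y' : ℝ => W1z vz1 vz2 vz3 vz4 x y' z) y -
            deriv (fun z' : ℝ => W1y vy1 vy2 vy3 vy4 x y z') z = 0 ∧
        deriv (fun z' : ℝ => W1x vx1 vx2 vx3 vx4 x y z') z -
            deriv (fun x' : ℝ => W1z vz1 vz2 vz3 vz4 x' y z) x = 0 ∧
        deriv (fun x' : ℝ => W1y vy1 vy2 vy3 vy4 x' y z) x -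
            deriv (fun y' : ℝ => W1x vx1 vx2 vx3 vx4 x y' z) y = 0) := by
  refine ⟨⟨fun x y z => ?_, fun x y z => ?_, fun x y z => ?_⟩, ?_⟩
  · rw [curl_x_eq_lineMap_circulation, lineMap_apply_ring]
    ring
  · rw [curl_y_eq_lineMap_circulation, lineMap_apply_ring]
    ring
  · rw [curl_z_eq_lineMap_circulation, lineMap_apply_ring]
    ring
  · intro circ_x_pos circ_x_neg circ_y_pos circ_y_neg circ_z_pos circ_z_neg x y z
    refine ⟨?_, ?_, ?_⟩
    · rw [curl_x_eq_lineMap_circulation, circ_x_neg, circ_x_pos, lineMap_same_apply]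
    · rw [curl_y_eq_lineMap_circulation, circ_y_neg, circ_y_pos, lineMap_same_apply]
    · rw [curl_z_eq_lineMap_circulation, circ_z_neg, circ_z_pos, lineMap_same_apply]
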